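/- arXiv:math/0310099 — 6 statements merged into one kernel-verified Lean document; each statement's English description precedes it below -/
import Mathlib

section
/- For integers p and q with 2 ≤ p < q, the groups Γ_p and Γ_q are not isomorphic. -/
/-- The relators of the group `Γ_p`: in the free group on four generators
`u = 0`, `v = 1`, `x = 2`, `y = 3`, the relators are `u^p v^(p+1)`,
`x^p y^(p+1)`, `(uv)(xy)⁻¹` and `(vu)(yx)⁻¹`. -/
def GammaRels (p : ℕ) : Set (FreeGroup (Fin 4)) :=
  { FreeGroup.of 0 ^ p * FreeGroup.of 1 ^ (p + 1),
    FreeGroup.of 2 ^ p * FreeGroup.of 3 ^ (p + 1),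
    (FreeGroup.of 0 * FreeGroup.of 1) * (FreeGroup.of 2 * FreeGroup.of 3)⁻¹,
    (FreeGroup.of 1 * FreeGroup.of 0) * (FreeGroup.of 3 * FreeGroup.of 2)⁻¹ }

/-- The group `Γ_p = ⟨u, v, x, y | u^p v^(p+1) = 1, x^p y^(p+1) = 1, uv = xy, vu = yx⟩`. -/
abbrev Gamma (p : ℕ) : Type := PresentedGroup (GammaRels p)

/-!
Let `G` be a group with a character `χ` such that the centralizer of every element outside `ker χ`
is commutative, for instance the affine group of a line with `χ` the linear part. If `f : Γ_p → G`
has nonabelian image, then `f u, f v` or `f x, f y` do not commute, because `u` and `v` are powers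
of `uv = xy` as soon as they commute. Say it is `f u, f v`. Both commute with
`f u ^ p = f v ^ (-(p + 1))`, so `χ (f u) ^ p = 1`, and it follows that `χ ∘ f` has exponent
dividing `p (p + 1)`. On the other hand, `Γ_q` maps to `Z/q * Z/(q + 1)`, which acts on the complex
line by homotheties about two distinct centres, with nonabelian image and with linear parts of
order exactly `q (q + 1)`.
-/

section Group

variable {G : Type*} [Group G] {p : ℕ} {a b : G}

theorem eq_mul_pow_succ_of_commute (hab : Commute a b) (h : a ^ p * b ^ (p + 1) = 1) :
    a = (a * b) ^ (p + 1) := by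
  rw [hab.mul_pow, pow_succ' a, mul_assoc, h, mul_one]

theorem left_mem_zpowers_mul_of_commute (hab : Commute a b) (h : a ^ p * b ^ (p + 1) = 1) :
    a ∈ Subgroup.zpowers (a * b) :=
  Set.mem_of_eq_of_mem (eq_mul_pow_succ_of_commute hab h)
    (pow_mem (Subgroup.mem_zpowers _) (p + 1))

theorem right_mem_zpowers_mul_of_commute (hab : Commute a b) (h : a ^ p * b ^ (p + 1) = 1) :
    b ∈ Subgroup.zpowers (a * b) :=
  (Subgroup.mul_mem_cancel_left _ (left_mem_zpowers_mul_of_commute hab h)).mp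
    (Subgroup.mem_zpowers _)

variable {A : Type*} [CommGroup A] {χ : G →* A}

/-- The centralizer of every element outside the kernel of `χ` is commutative, as for the linear
part on the affine group of a line. This limits the orders of the values of `χ` on a nonabelian
image of `Γ_p`. -/
def HasCommCentralizersOffKer (χ : G →* A) : Prop :=
  ∀ ⦃c g h : G⦄, χ c ≠ 1 → Commute c g → Commute c h → Commute g h

theorem HasCommCentralizersOffKer.commute_of_map_mul_pow_ne_one
    (hχ : HasCommCentralizersOffKer χ) (h : a ^ p * b ^ (p + 1) = 1)
    (hne : χ (a * b) ^ (p * (p + 1)) ≠ 1) : Commute a b := by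
  have hχa : χ a = χ (a * b) ^ (p + 1) := by
    rw [map_mul]
    exact eq_mul_pow_succ_of_commute (.all _ _) (by simpa using congrArg χ h)
  have hχap : χ (a ^ p) ≠ 1 := by
    rwa [map_pow, hχa, ← pow_mul, mul_comm (p + 1)]
  refine hχ hχap (.pow_self a p) ?_
  rw [eq_inv_of_mul_eq_one_left h]
  exact (Commute.pow_self b (p + 1)).inv_left

end Group

namespace Gamma

open PresentedGroup (of)

variable {p : ℕ} {G : Type*} [Group G]

theorem of_zero_mul_of_one : (of 0 * of 1 : Gamma p) = of 2 * of 3 :=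
  mul_inv_eq_one.mp (PresentedGroup.one_of_mem (rels := GammaRels p) (.inr (.inr (.inl rfl))))

/-- The homomorphism from `Γ_p` given by a pair with `a ^ p * b ^ (p + 1) = 1`: it sends both `u`
and `x` to `a`, and both `v` and `y` to `b`. -/
def fold (a b : G) (h : a ^ p * b ^ (p + 1) = 1) : Gamma p →* G :=
  PresentedGroup.toGroup (f := ![a, b, a, b]) <| by
    rintro r (rfl | rfl | rfl | rfl) <;> simp [h]

@[simp]
theorem fold_of_zero (a b : G) (h : a ^ p * b ^ (p + 1) = 1) : fold a b h (of 0) = a :=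
  PresentedGroup.toGroup.of _

@[simp]
theorem fold_of_one (a b : G) (h : a ^ p * b ^ (p + 1) = 1) : fold a b h (of 1) = b :=
  PresentedGroup.toGroup.of _

theorem map_of_zero_pow_mul_map_of_one_pow (f : Gamma p →* G) :
    f (of 0) ^ p * f (of 1) ^ (p + 1) = 1 := by
  have h : (of 0 : Gamma p) ^ p * of 1 ^ (p + 1) = 1 :=
    PresentedGroup.one_of_mem (rels := GammaRels p) (.inl rfl)
  simpa using congrArg f h

theorem map_of_two_pow_mul_map_of_three_pow (f : Gamma p →* G) :
    f (of 2) ^ p * f (of 3) ^ (p + 1) = 1 := by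
  have h : (of 2 : Gamma p) ^ p * of 3 ^ (p + 1) = 1 :=
    PresentedGroup.one_of_mem (rels := GammaRels p) (.inr (.inl rfl))
  simpa using congrArg f h

theorem map_mem_zpowers (f : Gamma p →* G) (huv : Commute (f (of 0)) (f (of 1)))
    (hxy : Commute (f (of 2)) (f (of 3))) (z : Gamma p) :
    f z ∈ Subgroup.zpowers (f (of 0 * of 1)) := by
  have hxy_eq : f (of 0 * of 1) = f (of 2) * f (of 3) := by rw [of_zero_mul_of_one, map_mul]
  have relUV := map_of_zero_pow_mul_map_of_one_pow f
  have relXY := map_of_two_pow_mul_map_of_three_pow f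
  refine PresentedGroup.generated_by _ ((Subgroup.zpowers (f (of 0 * of 1))).comap f) ?_ z
  intro i
  rw [Subgroup.mem_comap]
  match i with
  | 0 => exact map_mul f _ _ ▸ left_mem_zpowers_mul_of_commute huv relUV
  | 1 => exact map_mul f _ _ ▸ right_mem_zpowers_mul_of_commute huv relUV
  | 2 => exact hxy_eq ▸ left_mem_zpowers_mul_of_commute hxy relXY
  | 3 => exact hxy_eq ▸ right_mem_zpowers_mul_of_commute hxy relXY

theorem map_pow_eq_one_of_not_commute {A : Type*} [CommGroup A] {χ : G →* A}
    (hχ : HasCommCentralizersOffKer χ) (f : Gamma p →* G) {s t : Gamma p}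
    (hst : ¬ Commute (f s) (f t)) (z : Gamma p) : χ (f z) ^ (p * (p + 1)) = 1 := by
  have hw : χ (f (of 0 * of 1)) ^ (p * (p + 1)) = 1 := by
    by_contra hne
    have huv : Commute (f (of 0)) (f (of 1)) :=
      hχ.commute_of_map_mul_pow_ne_one (map_of_zero_pow_mul_map_of_one_pow f)
        (by rwa [← map_mul f])
    have hxy : Commute (f (of 2)) (f (of 3)) :=
      hχ.commute_of_map_mul_pow_ne_one (map_of_two_pow_mul_map_of_three_pow f)
        (by rwa [← map_mul f, ← of_zero_mul_of_one])
    obtain ⟨i, hi⟩ := map_mem_zpowers f huv hxy s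
    obtain ⟨j, hj⟩ := map_mem_zpowers f huv hxy t
    rw [← hi, ← hj] at hst
    exact hst (.zpow_zpow_self _ i j)
  obtain ⟨k, hk⟩ := map_mem_zpowers (χ.comp f) (.all _ _) (.all _ _) z
  have hk : χ (f (of 0 * of 1)) ^ k = χ (f z) := hk
  rw [← hk, ← zpow_natCast, zpow_comm, zpow_natCast, hw, one_zpow]

end Gamma

namespace AffineLine

open AffineEquiv (homothetyUnitsMulHom)

variable {K : Type*} [Field K]

variable (K) in
/-- The linear part of an affine automorphism `x ↦ r * x + b` of the line, as the scalar `r`. -/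
noncomputable def dilationRatio : (K ≃ᵃ[K] K) →* Kˣ :=
  LinearEquiv.det.comp AffineEquiv.linearHom

theorem apply_sub_apply (g : K ≃ᵃ[K] K) (x y : K) :
    g x - g y = dilationRatio K g * (x - y) := by
  have hdet : (dilationRatio K g : K) = g.linear 1 :=
    (LinearEquiv.coe_det g.linear).trans (LinearMap.det_ring _)
  have hlin : g.linear (x - y) = g x - g y := (g : K →ᵃ[K] K).linearMap_vsub x y
  rw [hdet, ← hlin, mul_comm, ← smul_eq_mul, ← map_smul, smul_eq_mul, mul_one]

theorem homothetyUnitsMulHom_apply (c x : K) (r : Kˣ) :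
    homothetyUnitsMulHom c r x = r * (x - c) + c := rfl

theorem dilationRatio_homothetyUnitsMulHom (c : K) (r : Kˣ) :
    dilationRatio K (homothetyUnitsMulHom c r) = r := by
  have h := apply_sub_apply (homothetyUnitsMulHom c r) (c + 1) c
  ext
  simpa [homothetyUnitsMulHom_apply] using h.symm

theorem eq_homothetyUnitsMulHom_of_apply_eq_self {g : K ≃ᵃ[K] K} {c : K} (hc : g c = c) :
    g = homothetyUnitsMulHom c (dilationRatio K g) := by
  ext x
  rw [homothetyUnitsMulHom_apply, ← apply_sub_apply, hc, sub_add_cancel]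

theorem eq_of_apply_eq_self {g : K ≃ᵃ[K] K} (hg : dilationRatio K g ≠ 1) {x y : K}
    (hx : g x = x) (hy : g y = y) : x = y := by
  have h := apply_sub_apply g x y
  rw [hx, hy] at h
  by_contra hxy
  exact hg (Units.ext ((right_eq_mul₀ (sub_ne_zero.mpr hxy)).mp h))

theorem exists_apply_eq_self {g : K ≃ᵃ[K] K} (hg : dilationRatio K g ≠ 1) : ∃ c, g c = c := by
  have hr : 1 - (dilationRatio K g : K) ≠ 0 :=
    sub_ne_zero.mpr fun h => hg (Units.ext h.symm)
  refine ⟨g 0 / (1 - dilationRatio K g), ?_⟩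
  have h := apply_sub_apply g (g 0 / (1 - dilationRatio K g)) 0
  rw [sub_eq_iff_eq_add.mp h]
  field_simp
  ring

theorem apply_eq_self_of_commute {g h : K ≃ᵃ[K] K} (hg : dilationRatio K g ≠ 1)
    (hgh : Commute g h) {c : K} (hc : g c = c) : h c = c := by
  refine eq_of_apply_eq_self hg ?_ hc
  calc g (h c) = h (g c) := DFunLike.congr_fun hgh.eq c
    _ = h c := by rw [hc]

theorem hasCommCentralizersOffKer_dilationRatio : HasCommCentralizersOffKer (dilationRatio K) := by
  intro k g h hk hkg hkh
  obtain ⟨c, hc⟩ := exists_apply_eq_self hk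
  rw [eq_homothetyUnitsMulHom_of_apply_eq_self (apply_eq_self_of_commute hk hkg hc),
    eq_homothetyUnitsMulHom_of_apply_eq_self (apply_eq_self_of_commute hk hkh hc)]
  exact (Commute.all _ _).map _

theorem not_commute_homothetyUnitsMulHom {c d : K} (hcd : c ≠ d) {r s : Kˣ} (hr : r ≠ 1)
    (hs : s ≠ 1) : ¬ Commute (homothetyUnitsMulHom c r) (homothetyUnitsMulHom d s) := by
  intro h
  have fixes (e : K) (t : Kˣ) : homothetyUnitsMulHom e t e = e := AffineMap.homothety_apply_same e _
  rw [← dilationRatio_homothetyUnitsMulHom c r] at hr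
  rw [← dilationRatio_homothetyUnitsMulHom d s] at hs
  exact hcd (eq_of_apply_eq_self hs (apply_eq_self_of_commute hr h (fixes c r)) (fixes d s))

end AffineLine

namespace Gamma

open AffineEquiv (homothetyUnitsMulHom)
open AffineLine

theorem exists_hom_affineLine {K : Type*} [Field K] {q : ℕ} (hq : 2 ≤ q) {ζ : Kˣ}
    (hζ : IsPrimitiveRoot ζ (q * (q + 1))) :
    ∃ f : Gamma q →* (K ≃ᵃ[K] K), (∃ s t, ¬ Commute (f s) (f t)) ∧
      ∃ z, dilationRatio K (f z) = ζ := by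
  let a : K ≃ᵃ[K] K := homothetyUnitsMulHom 0 (ζ ^ (q + 1))
  let b : K ≃ᵃ[K] K := homothetyUnitsMulHom 1 (ζ ^ q)⁻¹
  have ha : a ^ q = 1 := by
    rw [← map_pow, ← pow_mul, mul_comm, hζ.pow_eq_one, map_one]
  have hb : b ^ (q + 1) = 1 := by
    rw [← map_pow, inv_pow, ← pow_mul, hζ.pow_eq_one, inv_one, map_one]
  have hra : ζ ^ (q + 1) ≠ 1 := hζ.pow_ne_one_of_pos_of_lt (by lia) (by nlinarith)
  have hrb : ζ ^ q ≠ 1 := hζ.pow_ne_one_of_pos_of_lt (by lia) (by nlinarith)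
  refine ⟨fold a b (by rw [ha, hb, one_mul]), ⟨.of 0, .of 1, ?_⟩, .of 0 * .of 1, ?_⟩
  · rw [fold_of_zero, fold_of_one]
    exact not_commute_homothetyUnitsMulHom zero_ne_one hra (inv_ne_one.mpr hrb)
  · rw [map_mul, map_mul, fold_of_zero, fold_of_one, dilationRatio_homothetyUnitsMulHom,
      dilationRatio_homothetyUnitsMulHom, pow_succ', mul_inv_cancel_right]

end Gamma

/-- For `2 ≤ p < q`, the groups `Γ_p` and `Γ_q` are not isomorphic. -/
theorem gamma_not_isomorphic (p q : ℕ) (hp : 2 ≤ p) (hpq : p < q) :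
    ¬ Nonempty (Gamma p ≃* Gamma q) := by
  rintro ⟨e⟩
  have hn : q * (q + 1) ≠ 0 := mul_ne_zero (by lia) q.succ_ne_zero
  have hζ := (Complex.isPrimitiveRoot_exp _ hn).isUnit_unit hn
  have hlt : p * (p + 1) < q * (q + 1) := by gcongr
  obtain ⟨f, ⟨s, t, hst⟩, z, hz⟩ := Gamma.exists_hom_affineLine (hp.trans hpq.le) hζ
  have hpow : AffineLine.dilationRatio ℂ (f z) ^ (p * (p + 1)) = 1 := by
    simpa using Gamma.map_pow_eq_one_of_not_commute
      AffineLine.hasCommCentralizersOffKer_dilationRatio (f.comp e.toMonoidHom)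
      (s := e.symm s) (t := e.symm t) (by simpa using hst) (e.symm z)
  rw [hz] at hpow
  exact hζ.pow_ne_one_of_pos_of_lt (by positivity) hlt hpow
end

section
/- For every integer p ≥ 1, the identity 𝔭_p(t) · (t^(p+1) − 1) · (t^p − 1) = (t^(p(p+1)) − 1) · (t − 1) holds in the polynomial ring ℤ[t]. -/
/-! Put `S = ∑_{k ≤ p} t^(kp)` and `T = ∑_{k < p} t^(k(p+1))`. Reversing the first sum shows that
`𝔭_p = S - t T`. Both are geometric sums with the same numerator,
`S (t^p - 1) = t^(p(p+1)) - 1 = T (t^(p+1) - 1)`, so this common factor comes out and leaves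
`(t^(p+1) - 1) - t (t^p - 1) = t - 1`. -/

open Polynomial

/-- The polynomial `𝔭_p(t) = Σ_{k=0}^{p} t^(p²−kp) − Σ_{k=0}^{p−1} t^(k(p+1)+1)`
with integer coefficients. -/
noncomputable def frakP (p : ℕ) : Polynomial ℤ :=
  ∑ k ∈ Finset.range (p + 1), X ^ (p ^ 2 - k * p) -
    ∑ k ∈ Finset.range p, X ^ (k * (p + 1) + 1)

theorem sum_range_succ_mul_sub_mul {M : Type*} [AddCommMonoid M] (f : ℕ → M) (m n : ℕ) :
    ∑ k ∈ Finset.range (n + 1), f (n * m - k * m) = ∑ k ∈ Finset.range (n + 1), f (k * m) := by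
  simp only [← Nat.sub_mul]
  exact Finset.sum_flip fun k ↦ f (k * m)

theorem geom_sum_pow_mul {R : Type*} [Ring R] (x : R) (m n : ℕ) :
    (∑ k ∈ Finset.range n, x ^ (k * m)) * (x ^ m - 1) = x ^ (n * m) - 1 := by
  simp only [pow_mul', geom_sum_mul]

theorem frakP_eq_geom_sum_sub (p : ℕ) :
    frakP p = ∑ k ∈ Finset.range (p + 1), X ^ (k * p) -
      X * ∑ k ∈ Finset.range p, X ^ (k * (p + 1)) := by
  simp only [frakP, sq, sum_range_succ_mul_sub_mul (fun i ↦ (X : ℤ[X]) ^ i), pow_succ' X (_ * _),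
    Finset.mul_sum]

/-- For `p ≥ 1`, `𝔭_p(t)(t^(p+1) − 1)(t^p − 1) = (t^(p(p+1)) − 1)(t − 1)` in `ℤ[t]`. -/
theorem frakP_mul_eq (p : ℕ) (hp : 1 ≤ p) :
    frakP p * (X ^ (p + 1) - 1) * (X ^ p - 1) =
      (X ^ (p * (p + 1)) - 1) * (X - 1) := by
  set S : ℤ[X] := ∑ k ∈ Finset.range (p + 1), X ^ (k * p)
  set T : ℤ[X] := ∑ k ∈ Finset.range p, X ^ (k * (p + 1))
  have S_mul : S * (X ^ p - 1) = X ^ (p * (p + 1)) - 1 :=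
    mul_comm p (p + 1) ▸ geom_sum_pow_mul X p (p + 1)
  have T_mul : T * (X ^ (p + 1) - 1) = X ^ (p * (p + 1)) - 1 := geom_sum_pow_mul X (p + 1) p
  calc
    frakP p * (X ^ (p + 1) - 1) * (X ^ p - 1)
      = S * (X ^ p - 1) * (X ^ (p + 1) - 1) - X * (T * (X ^ (p + 1) - 1)) * (X ^ p - 1) := by
        rw [frakP_eq_geom_sum_sub]
        ring
    _ = (X ^ (p * (p + 1)) - 1) * ((X ^ (p + 1) - 1) - X * (X ^ p - 1)) := by
        rw [S_mul, T_mul]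
        ring
    _ = (X ^ (p * (p + 1)) - 1) * (X - 1) := by ring
end

section
/- For an integer p ≥ 2, the complex number ζ = exp(2πi/(p(p+1))) is a zero of 𝔭_p, i.e. 𝔭_p(ζ) = 0 in ℂ. -/
open Polynomial

/-!
Both sums in `𝔭_p` are geometric: `𝔭_p(t) = Σ_{k ≤ p} (t^p)^k - t Σ_{k < p} (t^(p+1))^k`. If
`ζ^(p(p+1)) = 1`, then `ζ^p` is a `(p+1)`-th root of unity and `ζ^(p+1)` a `p`-th one, so each
geometric sum vanishes at `ζ` as soon as its ratio is not `1`.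
-/

theorem geom_sum_eq_zero_of_pow_eq_one {R : Type*} [Ring R] [NoZeroDivisors R] {x : R} {n : ℕ}
    (hxn : x ^ n = 1) (hx : x ≠ 1) : ∑ k ∈ Finset.range n, x ^ k = 0 := by
  have hmul : (∑ k ∈ Finset.range n, x ^ k) * (x - 1) = 0 := by
    rw [geom_sum_mul, hxn, sub_self]
  exact (mul_eq_zero.mp hmul).resolve_right (sub_ne_zero.mpr hx)

theorem sum_pow_mul_sub_mul_eq_geom_sum {R : Type*} [Semiring R] (x : R) (m n : ℕ) :
    ∑ k ∈ Finset.range (n + 1), x ^ (n * m - k * m) = ∑ k ∈ Finset.range (n + 1), (x ^ m) ^ k := by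
  calc ∑ k ∈ Finset.range (n + 1), x ^ (n * m - k * m)
      = ∑ k ∈ Finset.range (n + 1), (x ^ m) ^ (n + 1 - 1 - k) := by
        simp only [← Nat.sub_mul, pow_mul', Nat.add_sub_cancel]
    _ = ∑ k ∈ Finset.range (n + 1), (x ^ m) ^ k := Finset.sum_range_reflect _ _

theorem sum_pow_mul_add_one_eq_mul_geom_sum {R : Type*} [Semiring R] (x : R) (m n : ℕ) :
    ∑ k ∈ Finset.range n, x ^ (k * m + 1) = x * ∑ k ∈ Finset.range n, (x ^ m) ^ k := by
  simp only [Finset.mul_sum, ← pow_mul, ← pow_succ', mul_comm m]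

theorem aeval_frakP {R : Type*} [Ring R] (x : R) (p : ℕ) :
    aeval x (frakP p) =
      ∑ k ∈ Finset.range (p + 1), (x ^ p) ^ k - x * ∑ k ∈ Finset.range p, (x ^ (p + 1)) ^ k := by
  rw [← sum_pow_mul_sub_mul_eq_geom_sum, ← sum_pow_mul_add_one_eq_mul_geom_sum]
  simp only [frakP, sq, map_sub, map_sum, map_pow, aeval_X]

theorem frakP_root_exp_general {R : Type*} [Ring R] [NoZeroDivisors R] {ζ : R} {p : ℕ}
    (hζ : ζ ^ (p * (p + 1)) = 1) (hζp : ζ ^ p ≠ 1) (hζp_succ : ζ ^ (p + 1) ≠ 1) :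
    aeval ζ (frakP p) = 0 := by
  have hfirst : ∑ k ∈ Finset.range (p + 1), (ζ ^ p) ^ k = 0 :=
    geom_sum_eq_zero_of_pow_eq_one (by rw [← pow_mul, hζ]) hζp
  have hsecond : ∑ k ∈ Finset.range p, (ζ ^ (p + 1)) ^ k = 0 :=
    geom_sum_eq_zero_of_pow_eq_one (by rw [← pow_mul', hζ]) hζp_succ
  rw [aeval_frakP, hfirst, hsecond, mul_zero, sub_zero]

/-- For `p ≥ 2`, the complex number `ζ = exp(2πi/(p(p+1)))` is a zero of `𝔭_p`. -/
theorem frakP_root_exp (p : ℕ) (hp : 2 ≤ p) :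
    Polynomial.aeval
        (Complex.exp (2 * Real.pi * Complex.I / ((p : ℂ) * ((p : ℂ) + 1))))
        (frakP p) = 0 := by
  have hζ := Complex.isPrimitiveRoot_exp (p * (p + 1)) (by positivity)
  push_cast at hζ
  exact frakP_root_exp_general hζ.pow_eq_one
    (hζ.pow_ne_one_of_pos_of_lt (by lia) (by nlinarith))
    (hζ.pow_ne_one_of_pos_of_lt (by lia) (by nlinarith))
end

section
/- For integers p and k with 2 ≤ p < k, the complex number ω = exp(2πi/(k(k+1))) satisfies 𝔭_p(ω) ≠ 0; in particular ω is not a zero of 𝔭_p(t)². -/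
open Polynomial

theorem frakP_eq_geom_sum_sub_geom_sum (p : ℕ) :
    frakP p = ∑ j ∈ Finset.range (p + 1), (X ^ p) ^ j -
      X * ∑ j ∈ Finset.range p, (X ^ (p + 1)) ^ j := by
  have first_sum : ∑ j ∈ Finset.range (p + 1), (X : ℤ[X]) ^ (p ^ 2 - j * p) =
      ∑ j ∈ Finset.range (p + 1), (X ^ p) ^ j := by
    rw [← Finset.sum_range_reflect]
    refine Finset.sum_congr rfl fun j hj ↦ ?_
    have hjp : j ≤ p := Finset.mem_range_succ_iff.mp hj
    rw [← pow_mul, Nat.add_sub_cancel, sq, ← Nat.sub_mul, Nat.sub_sub_self hjp, mul_comm]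
  have second_sum : ∑ j ∈ Finset.range p, (X : ℤ[X]) ^ (j * (p + 1) + 1) =
      X * ∑ j ∈ Finset.range p, (X ^ (p + 1)) ^ j := by
    simp only [Finset.mul_sum, pow_succ', pow_mul']
  rw [frakP, first_sum, second_sum]

/-- This identifies `𝔭_p` with the Alexander polynomial of the torus knot `T(p, p + 1)`; in
particular all of its zeros are `p (p + 1)`-th roots of unity. -/
theorem frakP_mul_X_pow_sub_one_mul_X_pow_succ_sub_one (p : ℕ) :
    frakP p * ((X ^ p - 1) * (X ^ (p + 1) - 1)) = (X ^ (p * (p + 1)) - 1) * (X - 1) := by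
  have geom_p : (∑ j ∈ Finset.range (p + 1), (X ^ p) ^ j) * (X ^ p - 1) =
      (X : ℤ[X]) ^ (p * (p + 1)) - 1 := by
    rw [geom_sum_mul, ← pow_mul]
  have geom_succ : (∑ j ∈ Finset.range p, (X ^ (p + 1)) ^ j) * (X ^ (p + 1) - 1) =
      (X : ℤ[X]) ^ (p * (p + 1)) - 1 := by
    rw [geom_sum_mul, ← pow_mul']
  rw [frakP_eq_geom_sum_sub_geom_sum]
  linear_combination (X ^ (p + 1) - 1) * geom_p - X * (X ^ p - 1) * geom_succ

theorem frakP_not_root_exp_general {R : Type*} [Ring R] [NoZeroDivisors R] {p : ℕ} {w : R}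
    (hw : w ^ (p * (p + 1)) ≠ 1) :
    aeval w (frakP p) ≠ 0 ∧ aeval w (frakP p ^ 2) ≠ 0 := by
  have hw_one : w ≠ 1 := by
    rintro rfl
    exact hw (one_pow _)
  have aeval_ne_zero : aeval w (frakP p) ≠ 0 := by
    have key := congrArg (aeval w) (frakP_mul_X_pow_sub_one_mul_X_pow_succ_sub_one p)
    simp only [map_mul, map_sub, map_pow, map_one, aeval_X] at key
    exact left_ne_zero_of_mul (key ▸ mul_ne_zero (sub_ne_zero.mpr hw) (sub_ne_zero.mpr hw_one))
  exact ⟨aeval_ne_zero, by simpa only [map_pow] using pow_ne_zero 2 aeval_ne_zero⟩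

/-- For `2 ≤ p < k`, the complex number `ω = exp(2πi/(k(k+1)))` is not a zero of
`𝔭_p`; in particular it is not a zero of `𝔭_p(t)²`. -/
theorem frakP_not_root_exp (p k : ℕ) (hp : 2 ≤ p) (hpk : p < k) :
    Polynomial.aeval
        (Complex.exp (2 * Real.pi * Complex.I / ((k : ℂ) * ((k : ℂ) + 1))))
        (frakP p) ≠ 0 ∧
    Polynomial.aeval
        (Complex.exp (2 * Real.pi * Complex.I / ((k : ℂ) * ((k : ℂ) + 1))))
        (frakP p ^ 2) ≠ 0 := by
  have hω := Complex.isPrimitiveRoot_exp (k * (k + 1)) (mul_ne_zero (by lia) k.succ_ne_zero)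
  push_cast at hω
  exact frakP_not_root_exp_general
    (hω.pow_ne_one_of_pos_of_lt (by positivity) (by gcongr))
end

section
/- For an integer p ≥ 2, the group Γ_p is not abelian; in particular Γ_p is not isomorphic to the infinite cyclic group ℤ. -/
/-!
Identifying `x` with `u` and `y` with `v` makes the last two relations of `Γ_p` trivial, so any two
elements `a`, `b` of a group with `a ^ p = b ^ (p + 1) = 1` are the images of `u`, `v` under a
homomorphism from `Γ_p`. It then suffices to find such `a`, `b` that do not commute. In the affine
group of `ℂ`, take rotations of orders `p` and `p + 1` about two distinct points: homotheties of
ratios `z`, `w` with centres `c`, `d` commute only if `(1 - z) (1 - w) (c - d) = 0`.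
-/

namespace Gamma

/-- The generator `u` of `Γ_p`. -/
def u (p : ℕ) : Gamma p := PresentedGroup.of 0

/-- The generator `v` of `Γ_p`. -/
def v (p : ℕ) : Gamma p := PresentedGroup.of 1

variable {p : ℕ} {G : Type*} [Group G] {a b : G}

/-- The homomorphism `Γ_p → G` sending `u` and `x` to `a`, and `v` and `y` to `b`; it exhibits the
subgroup generated by `a` and `b` as a quotient of `Γ_p`. -/
def liftPair (h : a ^ p * b ^ (p + 1) = 1) : Gamma p →* G :=
  PresentedGroup.toGroup (f := ![a, b, a, b]) <| by
    rintro r (rfl | rfl | rfl | rfl) <;> simp [h]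

theorem liftPair_u (h : a ^ p * b ^ (p + 1) = 1) : liftPair h (u p) = a :=
  PresentedGroup.toGroup.of _

theorem liftPair_v (h : a ^ p * b ^ (p + 1) = 1) : liftPair h (v p) = b :=
  PresentedGroup.toGroup.of _

theorem commute_of_commute_u_v (h : a ^ p * b ^ (p + 1) = 1) (huv : Commute (u p) (v p)) :
    Commute a b := by
  simpa only [liftPair_u, liftPair_v] using huv.map (liftPair h)

end Gamma

section Homothety

open AffineMap (homothety)
open AffineEquiv (homothetyUnitsMulHom)

variable {R V P : Type*} [CommRing R] [AddCommGroup V] [Module R V] [AddTorsor V P]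

theorem homothety_homothety_vsub_homothety_homothety (c d x : P) (r s : R) :
    homothety c r (homothety d s x) -ᵥ homothety d s (homothety c r x) =
      ((1 - r) * (1 - s)) • (c -ᵥ d) := by
  have hxd : x -ᵥ d = (x -ᵥ c) + (c -ᵥ d) := (vsub_add_vsub_cancel x c d).symm
  have hdc : d -ᵥ c = -(c -ᵥ d) := (neg_vsub_eq_vsub_rev c d).symm
  simp only [AffineMap.homothety_apply, vadd_vsub_assoc, vsub_vadd_eq_vsub_sub, hxd, hdc]
  module

theorem commute_homothetyUnitsMulHom_iff [IsDomain R] [Module.IsTorsionFree R V]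
    {c d : P} {z w : Rˣ} :
    Commute (homothetyUnitsMulHom c z : P ≃ᵃ[R] P) (homothetyUnitsMulHom d w) ↔
      z = 1 ∨ w = 1 ∨ c = d :=
  calc
    Commute (homothetyUnitsMulHom c z : P ≃ᵃ[R] P) (homothetyUnitsMulHom d w)
    _ ↔ ∀ x, homothety c (z : R) (homothety d (w : R) x) =
          homothety d (w : R) (homothety c (z : R) x) := AffineEquiv.ext_iff
    _ ↔ ((1 - z : R) * (1 - w)) • (c -ᵥ d) = 0 := by
      simp only [← vsub_eq_zero_iff_eq (G := V) (P := P),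
        homothety_homothety_vsub_homothety_homothety, forall_const]
    _ ↔ z = 1 ∨ w = 1 ∨ c = d := by
      simp [sub_eq_zero, or_assoc, eq_comm (a := (1 : R))]

theorem exists_pow_eq_one_and_not_commute {m n : ℕ} (hm : 2 ≤ m) (hn : 2 ≤ n) :
    ∃ a b : ℂ ≃ᵃ[ℂ] ℂ, a ^ m = 1 ∧ b ^ n = 1 ∧ ¬ Commute a b := by
  have exists_ne_one {k : ℕ} (hk : 2 ≤ k) : ∃ z : ℂˣ, z ^ k = 1 ∧ z ≠ 1 := by
    have hζ := (Complex.isPrimitiveRoot_exp k (by lia)).isUnit_unit (by lia)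
    exact ⟨_, hζ.pow_eq_one, hζ.ne_one hk⟩
  obtain ⟨z, hzm, hz⟩ := exists_ne_one hm
  obtain ⟨w, hwn, hw⟩ := exists_ne_one hn
  refine ⟨homothetyUnitsMulHom 0 z, homothetyUnitsMulHom 1 w, ?_, ?_, ?_⟩
  · rw [← map_pow, hzm, map_one]
  · rw [← map_pow, hwn, map_one]
  · simp [commute_homothetyUnitsMulHom_iff, hz, hw]

end Homothety

theorem Gamma.not_commute_u_v {p : ℕ} (hp : 2 ≤ p) : ¬ Commute (u p) (v p) := by
  obtain ⟨a, b, ha, hb, hab⟩ := exists_pow_eq_one_and_not_commute hp (Nat.le_succ_of_le hp)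
  exact fun huv => hab (commute_of_commute_u_v (by rw [ha, hb, one_mul]) huv)

/-- For `p ≥ 2`, the group `Γ_p` is not abelian; in particular it is not
isomorphic to the infinite cyclic group `ℤ`. -/
theorem gamma_not_abelian (p : ℕ) (hp : 2 ≤ p) :
    (¬ ∀ a b : Gamma p, a * b = b * a) ∧
      ¬ Nonempty (Gamma p ≃* Multiplicative ℤ) := by
  have not_comm : ¬ ∀ a b : Gamma p, a * b = b * a := fun h =>
    Gamma.not_commute_u_v hp (h _ _)
  refine ⟨not_comm, ?_⟩
  rintro ⟨e⟩
  exact not_comm fun a b => (Commute.all (e a) (e b)).of_map e.injective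
end

section
/- For an integer p ≥ 2, set y = a₁a₂⋯a_p and x = a₁⁻¹ y⁻¹ in the group W_p. Then x^p y^(p+1) = 1 holds in W_p, and the two elements x and y generate W_p. -/
/-- In the free group on generators `z` (indexed by `none`) and `a₁, …, a_p`
(with `aᵢ` indexed by `some (i-1)`), the word `a₁a₂⋯a_p`. -/
def wA (p : ℕ) : FreeGroup (Option (Fin p)) :=
  (List.ofFn fun k : Fin p => FreeGroup.of (some k)).prod

/-- The Wirtinger relators of the `(p, p+1)` torus knot group:
`z(a₁⋯a_p a₁)⁻¹`, `z a₁ z⁻¹ a_p⁻¹`, and `z a_{k+1} z⁻¹ a_k⁻¹` for `1 ≤ k ≤ p−1`.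
Here `z` is indexed by `none` and `aᵢ` by `some (i-1)`. -/
def WirtingerRels (p : ℕ) (hp : 2 ≤ p) : Set (FreeGroup (Option (Fin p))) :=
  let z : FreeGroup (Option (Fin p)) := FreeGroup.of none
  let a : Fin p → FreeGroup (Option (Fin p)) := fun k => FreeGroup.of (some k)
  {z * (wA p * a ⟨0, by omega⟩)⁻¹,
   z * a ⟨0, by omega⟩ * z⁻¹ * (a ⟨p - 1, by omega⟩)⁻¹} ∪
  {r | ∃ k : Fin (p - 1),
    r = z * a ⟨(k : ℕ) + 1, by have := k.2; omega⟩ * z⁻¹ *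
          (a ⟨(k : ℕ), by have := k.2; omega⟩)⁻¹}

/-- The group `W_p` with Wirtinger presentation
`⟨z, a₁, …, a_p | z = a₁⋯a_p a₁, z a₁ z⁻¹ = a_p, z a_{k+1} z⁻¹ = a_k (1 ≤ k ≤ p−1)⟩`. -/
abbrev WirtingerGroup (p : ℕ) (hp : 2 ≤ p) : Type := PresentedGroup (WirtingerRels p hp)

/-!
Write `y = a₁⋯a_p` and `z = y a₁`, so that `x = z⁻¹`. The relations `z a_{k+1} = a_k z` give
`z ^ k * a_{k+1} = a₁ * z ^ k`, hence `y * z ^ k * a_{k+1} = z ^ (k + 1)`. Multiplying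
`y ^ p` by `a₁, …, a_p` in turn therefore trades each factor `y` for a factor `z`, and
`y ^ p * y = z ^ p`. For generation, `a₁ = y⁻¹ z`, and the other `a_k` are its conjugates by
powers of `z`.
-/

section Monoid

variable {M : Type*} [Monoid M] {n : ℕ} {y z : M} {a : Fin (n + 1) → M}

theorem semiconjBy_pow_val_of_succ (ha : ∀ k : Fin n, SemiconjBy z (a k.succ) (a k.castSucc))
    (k : Fin (n + 1)) : SemiconjBy (z ^ (k : ℕ)) (a k) (a 0) := by
  induction k using Fin.induction with
  | zero => simp
  | succ k ih => exact pow_succ z (k : ℕ) ▸ ih.mul_left (ha k)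

theorem pow_mul_prod_ofFn_eq_pow (hz : y * a 0 = z)
    (ha : ∀ k : Fin n, SemiconjBy z (a k.succ) (a k.castSucc)) :
    y ^ (n + 1) * (List.ofFn a).prod = z ^ (n + 1) := by
  induction n with
  | zero => simpa using hz
  | succ n ih =>
    have hinit : y ^ (n + 1) * (List.ofFn fun k : Fin (n + 1) => a k.castSucc).prod =
        z ^ (n + 1) := ih hz fun k => ha k.castSucc
    have hlast : z ^ (n + 1) * a (Fin.last (n + 1)) = a 0 * z ^ (n + 1) :=
      semiconjBy_pow_val_of_succ ha (Fin.last (n + 1))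
    rw [List.ofFn_succ', List.concat_eq_append, List.prod_append, List.prod_singleton]
    calc y ^ (n + 2) * ((List.ofFn fun k : Fin (n + 1) => a k.castSucc).prod * a (Fin.last (n + 1)))
        = y * (z ^ (n + 1) * a (Fin.last (n + 1))) := by
          rw [← hinit, pow_succ' y (n + 1)]
          simp only [mul_assoc]
      _ = y * a 0 * z ^ (n + 1) := by rw [hlast, mul_assoc]
      _ = z ^ (n + 2) := by rw [hz, ← pow_succ']

end Monoid

section Group

variable {G : Type*} [Group G] {n : ℕ} {y z : G} {a : Fin (n + 1) → G}

theorem mem_of_semiconjBy_of_zero_mem {H : Subgroup G} (hz : z ∈ H) (h₀ : a 0 ∈ H)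
    (ha : ∀ k : Fin n, SemiconjBy z (a k.succ) (a k.castSucc)) (k : Fin (n + 1)) : a k ∈ H := by
  have hzk : z ^ (k : ℕ) ∈ H := H.pow_mem hz k
  rw [← H.mul_mem_cancel_left hzk, (semiconjBy_pow_val_of_succ ha k).eq]
  exact H.mul_mem h₀ hzk

theorem closure_pair_eq_closure_insert_range (hy : y = (List.ofFn a).prod) (hz : z = y * a 0)
    (ha : ∀ k : Fin n, SemiconjBy z (a k.succ) (a k.castSucc)) :
    Subgroup.closure {(a 0)⁻¹ * y⁻¹, y} = Subgroup.closure (insert z (Set.range a)) := by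
  apply le_antisymm
  · set K := Subgroup.closure (insert z (Set.range a))
    have haK : ∀ k, a k ∈ K := fun k => Subgroup.subset_closure (.inr ⟨k, rfl⟩)
    have hyK : y ∈ K := hy ▸ K.list_prod_mem (List.forall_mem_ofFn_iff.mpr haK)
    rw [Subgroup.closure_le, Set.pair_subset_iff]
    exact ⟨K.mul_mem (K.inv_mem (haK 0)) (K.inv_mem hyK), hyK⟩
  · set H := Subgroup.closure {(a 0)⁻¹ * y⁻¹, y}
    have hyH : y ∈ H := Subgroup.subset_closure (.inr rfl)
    have hzH : z ∈ H := by
      rw [← H.inv_mem_iff, hz, mul_inv_rev]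
      exact Subgroup.subset_closure (.inl rfl)
    have h₀H : a 0 ∈ H := by rwa [← H.mul_mem_cancel_left hyH, ← hz]
    rw [Subgroup.closure_le, Set.insert_subset_iff, Set.range_subset_iff]
    exact ⟨hzH, mem_of_semiconjBy_of_zero_mem hzH h₀H ha⟩

theorem wirtinger_xy_general (hy : y = (List.ofFn a).prod) (hz : z = y * a 0)
    (ha : ∀ k : Fin n, SemiconjBy z (a k.succ) (a k.castSucc)) :
    ((a 0)⁻¹ * y⁻¹) ^ (n + 1) * y ^ (n + 2) = 1 ∧
      Subgroup.closure {(a 0)⁻¹ * y⁻¹, y} = Subgroup.closure (insert z (Set.range a)) := by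
  have hpow : y ^ (n + 2) = z ^ (n + 1) := by
    rw [pow_succ, ← pow_mul_prod_ofFn_eq_pow hz.symm ha, ← hy]
  refine ⟨?_, closure_pair_eq_closure_insert_range hy hz ha⟩
  rw [hpow, ← mul_inv_rev, ← hz, inv_pow, inv_mul_cancel]

end Group

namespace WirtingerGroup

theorem mk_wA (p : ℕ) (hp : 2 ≤ p) :
    PresentedGroup.mk (WirtingerRels p hp) (wA p) =
      (List.ofFn fun k : Fin p => (PresentedGroup.of (some k) : WirtingerGroup p hp)).prod := by
  rw [wA, map_list_prod, List.map_ofFn]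
  rfl

theorem of_none (n : ℕ) (hn : 2 ≤ n + 1) :
    (PresentedGroup.of none : WirtingerGroup (n + 1) hn) =
      PresentedGroup.mk (WirtingerRels (n + 1) hn) (wA (n + 1)) * PresentedGroup.of (some 0) := by
  have hrel : PresentedGroup.mk (WirtingerRels (n + 1) hn) _ = 1 :=
    PresentedGroup.one_of_mem (.inl (.inl rfl))
  rwa [map_mul, map_inv, mul_inv_eq_one, map_mul] at hrel

theorem semiconjBy_of_none (n : ℕ) (hn : 2 ≤ n + 1) (k : Fin n) :
    SemiconjBy (PresentedGroup.of none : WirtingerGroup (n + 1) hn)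
      (PresentedGroup.of (some k.succ)) (PresentedGroup.of (some k.castSucc)) := by
  have hrel : PresentedGroup.mk (WirtingerRels (n + 1) hn) _ = 1 :=
    PresentedGroup.one_of_mem (.inr ⟨k, rfl⟩)
  rwa [map_mul, map_inv, mul_inv_eq_one, map_mul, map_mul, map_inv, mul_inv_eq_iff_eq_mul] at hrel

end WirtingerGroup

/-- For `p ≥ 2`, setting `y = a₁a₂⋯a_p` and `x = a₁⁻¹y⁻¹` in `W_p`, one has
`x^p y^(p+1) = 1`, and `x` and `y` generate `W_p`. -/
theorem wirtinger_xy (p : ℕ) (hp : 2 ≤ p) :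
    ((PresentedGroup.of (some ⟨0, by omega⟩) : WirtingerGroup p hp)⁻¹ *
          (PresentedGroup.mk (WirtingerRels p hp) (wA p))⁻¹) ^ p *
        (PresentedGroup.mk (WirtingerRels p hp) (wA p)) ^ (p + 1) = 1 ∧
    Subgroup.closure
        {(PresentedGroup.of (some ⟨0, by omega⟩) : WirtingerGroup p hp)⁻¹ *
            (PresentedGroup.mk (WirtingerRels p hp) (wA p))⁻¹,
          PresentedGroup.mk (WirtingerRels p hp) (wA p)} = ⊤ := by
  obtain ⟨n, rfl⟩ : ∃ n, p = n + 1 := ⟨p - 1, by omega⟩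
  have h := wirtinger_xy_general (WirtingerGroup.mk_wA (n + 1) hp)
    (WirtingerGroup.of_none n hp) (WirtingerGroup.semiconjBy_of_none n hp)
  have hrange := Option.range_eq (PresentedGroup.of (rels := WirtingerRels (n + 1) hp))
  exact ⟨h.1, h.2.trans (hrange ▸ PresentedGroup.closure_range_of _)⟩
end
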